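/- For every v ∈ ℝ^{2N} it holds that vᵀ P 𝓚 P v ≤ ‖v‖_S² · max_k Σ_{j=1}^N w_{jk}|1 − (v*_j/v*_k)cos(θ*_{jk})|, where P = I_{2N} − 𝐒𝐒ᵀ and ‖v‖_S denotes the Euclidean distance of v to the subspace S = range(𝐒). -/

import Mathlib

noncomputable section

open Real Matrix MeasureTheory Metric
open scoped BigOperators

/-- ℝ² with the Euclidean norm. -/
abbrev E2 : Type := EuclideanSpace ℝ (Fin 2)

/-- The state space ℝ^{2N}: N blocks of ℝ², with the Euclidean norm. -/
abbrev St (N : ℕ) : Type := EuclideanSpace ℝ (Fin N × Fin 2)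

/-- The 2×2 rotation matrix R(θ). -/
def Rot (θ : ℝ) : Matrix (Fin 2) (Fin 2) ℝ :=
  !![Real.cos θ, -Real.sin θ; Real.sin θ, Real.cos θ]

def toE2 (x : Fin 2 → ℝ) : E2 := (WithLp.equiv 2 (Fin 2 → ℝ)).symm x
def ofE2 (x : E2) : Fin 2 → ℝ := WithLp.equiv 2 (Fin 2 → ℝ) x
def toSt {N : ℕ} (x : Fin N × Fin 2 → ℝ) : St N :=
  (WithLp.equiv 2 (Fin N × Fin 2 → ℝ)).symm x
def ofSt {N : ℕ} (v : St N) : Fin N × Fin 2 → ℝ := WithLp.equiv 2 (Fin N × Fin 2 → ℝ) v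

/-- The k-th ℝ²-block of a state vector. -/
def blk {N : ℕ} (v : St N) (k : Fin N) : E2 := toE2 fun i => ofSt v (k, i)

/-- Action of a 2×2 matrix on ℝ². -/
def act2 (M : Matrix (Fin 2) (Fin 2) ℝ) (x : E2) : E2 := toE2 (M.mulVec (ofE2 x))

/-- Action of a 2N×2N matrix on the state space. -/
def act {N : ℕ} (M : Matrix (Fin N × Fin 2) (Fin N × Fin 2) ℝ) (v : St N) : St N :=
  toSt (M.mulVec (ofSt v))

/-- Block-diagonal 2N×2N matrix built from N 2×2 blocks. -/
def blockDiag {N : ℕ} (d : Fin N → Matrix (Fin 2) (Fin 2) ℝ) :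
    Matrix (Fin N × Fin 2) (Fin N × Fin 2) ℝ :=
  Matrix.of fun p q => if p.1 = q.1 then d p.1 p.2 q.2 else 0

/-- 𝓙 = I_N ⊗ J where J = R(π/2). -/
def Jbig (N : ℕ) : Matrix (Fin N × Fin 2) (Fin N × Fin 2) ℝ :=
  blockDiag fun _ => Rot (π / 2)

/-- The weighted graph Laplacian L (with the convention w k k = 0). -/
def lapMat {N : ℕ} (w : Fin N → Fin N → ℝ) : Matrix (Fin N) (Fin N) ℝ :=
  Matrix.of fun k j => if k = j then ∑ l, w k l else -(w k j)

/-- 𝓛 = L ⊗ I₂. -/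
def Lbig {N : ℕ} (w : Fin N → Fin N → ℝ) : Matrix (Fin N × Fin 2) (Fin N × Fin 2) ℝ :=
  Matrix.of fun p q => lapMat w p.1 q.1 * (if p.2 = q.2 then 1 else 0)

/-- K_k = Σ_j w_{jk} (I₂ − (v*_j/v*_k) R(θ*_{jk})). -/
def Kmat {N : ℕ} (w : Fin N → Fin N → ℝ) (vst θs : Fin N → ℝ) (k : Fin N) :
    Matrix (Fin 2) (Fin 2) ℝ :=
  ∑ j, w j k • ((1 : Matrix (Fin 2) (Fin 2) ℝ) - (vst j / vst k) • Rot (θs j - θs k))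

/-- 𝓚 = blockdiag(K₁,…,K_N). -/
def Kbig {N : ℕ} (w : Fin N → Fin N → ℝ) (vst θs : Fin N → ℝ) :
    Matrix (Fin N × Fin 2) (Fin N × Fin 2) ℝ :=
  blockDiag (Kmat w vst θs)

/-- The diagonal matrix Φ(v) = blockdiag(Φ_k(v_k) I₂). -/
def PhiMat {N : ℕ} (vst : Fin N → ℝ) (v : St N) :
    Matrix (Fin N × Fin 2) (Fin N × Fin 2) ℝ :=
  Matrix.diagonal fun p => (vst p.1 - ‖blk v p.1‖) / vst p.1

/-- The closed-loop vector field f(v) = (ω₀𝓙 + η(𝓚 − 𝓛) + αΦ(v))v. -/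
def fcl {N : ℕ} (w : Fin N → Fin N → ℝ) (vst θs : Fin N → ℝ) (ω₀ η α : ℝ) (v : St N) :
    St N :=
  act (ω₀ • Jbig N + η • (Kbig w vst θs - Lbig w) + α • PhiMat vst v) v

/-- The rotating-frame vector field f̄(v̄) = η(𝓚 − 𝓛)v̄ + αΦ(v̄)v̄. -/
def fbar {N : ℕ} (w : Fin N → Fin N → ℝ) (vst θs : Fin N → ℝ) (η α : ℝ) (v : St N) :
    St N :=
  act (η • (Kbig w vst θs - Lbig w) + α • PhiMat vst v) v

/-- v : ℝ → St N is a (global) solution of dx/dt = g(x). -/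
def IsSol {N : ℕ} (g : St N → St N) (v : ℝ → St N) : Prop :=
  ∀ t : ℝ, HasDerivAt v (g (v t)) t

/-- The set S of states with the prescribed relative phase angles (and magnitude ratios). -/
def Sset {N : ℕ} [NeZero N] (vst θs : Fin N → ℝ) : Set (St N) :=
  {v | ∀ k, (vst k)⁻¹ • blk v k = act2 (Rot (θs k)) ((vst 0)⁻¹ • blk v 0)}

/-- The set A of states with the prescribed magnitudes. -/
def Aset {N : ℕ} (vst : Fin N → ℝ) : Set (St N) :=
  {v | ∀ k, ‖blk v k‖ = vst k}

/-- The set F_{g,ω} of synchronous points: g(v) = ω𝓙v. -/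
def Fset {N : ℕ} (g : St N → St N) (ω : ℝ) : Set (St N) :=
  {v | g v = ω • act (Jbig N) v}

/-- The target set T_{g,ω} = S ∩ F_{g,ω} ∩ A. -/
def Tset {N : ℕ} [NeZero N] (vst θs : Fin N → ℝ) (g : St N → St N) (ω : ℝ) : Set (St N) :=
  Sset vst θs ∩ Fset g ω ∩ Aset vst

/-- The second-smallest eigenvalue of a graph Laplacian, via the Courant–Fischer
characterization: the minimum of the Rayleigh quotient over unit vectors orthogonal to
the all-ones vector (an eigenvector for the smallest eigenvalue 0 of a Laplacian). -/
def lambda2 {N : ℕ} (L : Matrix (Fin N) (Fin N) ℝ) : ℝ :=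
  sInf {r | ∃ x : Fin N → ℝ, (∑ k, x k ^ 2) = 1 ∧ (∑ k, x k) = 0 ∧ r = x ⬝ᵥ L.mulVec x}

/-- The simple graph with an edge between j ≠ k whenever w j k ≠ 0. -/
def wGraph {N : ℕ} (w : Fin N → Fin N → ℝ) : SimpleGraph (Fin N) :=
  SimpleGraph.fromRel fun j k => w j k ≠ 0

/-- Condition 1 (the stability condition). -/
def Cond1 {N : ℕ} (w : Fin N → Fin N → ℝ) (vst θs : Fin N → ℝ) (η α : ℝ) : Prop :=
  (∀ k, θs k ∈ Set.Icc (0 : ℝ) (π / 2)) ∧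
  (⨆ k, ∑ j, w j k * |1 - vst j / vst k * Real.cos (θs j - θs k)|) + α / η
    < 1 / 2 * ((⨅ k, vst k) ^ 2 / (⨆ k, vst k) ^ 2) * lambda2 (lapMat w)

/-- The 2N×2 matrix 𝐒 with k-th block v*_k R(θ*_{k1}), normalized so that 𝐒ᵀ𝐒 = I₂. -/
def Smat {N : ℕ} (vst θs : Fin N → ℝ) : Matrix (Fin N × Fin 2) (Fin 2) ℝ :=
  Matrix.of fun p i => (Real.sqrt (∑ n, vst n ^ 2))⁻¹ * (vst p.1 * Rot (θs p.1) p.2 i)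

/-- P = I − 𝐒𝐒ᵀ, the orthogonal projector onto the orthogonal complement of range 𝐒. -/
def Pmat {N : ℕ} (vst θs : Fin N → ℝ) : Matrix (Fin N × Fin 2) (Fin N × Fin 2) ℝ :=
  1 - Smat vst θs * (Smat vst θs)ᵀ

/-- The subspace S, realized as the range of 𝐒. -/
def SsetR {N : ℕ} (vst θs : Fin N → ℝ) : Set (St N) :=
  {v | ∃ c : Fin 2 → ℝ, v = toSt ((Smat vst θs).mulVec c)}

/-- The quadratic form vᵀ M v. -/
def qf {N : ℕ} (M : Matrix (Fin N × Fin 2) (Fin N × Fin 2) ℝ) (v : St N) : ℝ :=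
  ofSt v ⬝ᵥ M.mulVec (ofSt v)

/-- The largest singular value of a matrix: its ℓ² → ℓ² operator norm. -/
def sigmaMax {N : ℕ} (M : Matrix (Fin N × Fin 2) (Fin N × Fin 2) ℝ) : ℝ :=
  ‖LinearMap.toContinuousLinearMap (Matrix.toEuclideanLin M)‖

theorem aux_SS {N : ℕ} [NeZero N] (vst θs : Fin N → ℝ) (hvst : ∀ k, 0 < vst k) :
    (Smat vst θs)ᵀ * Smat vst θs = 1 := by
  have hpos : 0 < ∑ n, vst n ^ 2 :=
    Finset.sum_pos (fun n _ => pow_pos (hvst n) 2) Finset.univ_nonempty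
  have key : ∀ c : ℝ, c = (Real.sqrt (∑ n, vst n ^ 2))⁻¹ → c ^ 2 * ∑ n, vst n ^ 2 = 1 := by
    intro c hc
    rw [hc, inv_pow, Real.sq_sqrt hpos.le, inv_mul_cancel₀ hpos.ne']
  ext i j
  simp only [Matrix.mul_apply, Matrix.transpose_apply, Smat, Matrix.of_apply,
    Fintype.sum_prod_type, Fin.sum_univ_two]
  generalize hc : (Real.sqrt (∑ n, vst n ^ 2))⁻¹ = c
  have hk := key c hc.symm
  rw [Finset.mul_sum] at hk
  fin_cases i <;> fin_cases j <;> simp [Rot]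
  · rw [← hk]
    refine Finset.sum_congr rfl fun k _ => ?_
    linear_combination (c ^ 2 * vst k ^ 2) * Real.sin_sq_add_cos_sq (θs k)
  · refine Finset.sum_eq_zero fun k _ => ?_
    ring
  · refine Finset.sum_eq_zero fun k _ => ?_
    ring
  · rw [← hk]
    refine Finset.sum_congr rfl fun k _ => ?_
    linear_combination (c ^ 2 * vst k ^ 2) * Real.sin_sq_add_cos_sq (θs k)

theorem aux_PT {N : ℕ} (vst θs : Fin N → ℝ) : (Pmat vst θs)ᵀ = Pmat vst θs := by
  simp [Pmat, Matrix.transpose_mul]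

theorem aux_PS {N : ℕ} [NeZero N] (vst θs : Fin N → ℝ) (hvst : ∀ k, 0 < vst k) :
    Pmat vst θs * Smat vst θs = 0 := by
  rw [Pmat, Matrix.sub_mul, Matrix.mul_assoc, aux_SS vst θs hvst]
  simp

theorem aux_PP {N : ℕ} [NeZero N] (vst θs : Fin N → ℝ) (hvst : ∀ k, 0 < vst k) :
    Pmat vst θs * Pmat vst θs = Pmat vst θs := by
  conv_lhs => rhs; rw [Pmat]
  rw [Matrix.mul_sub, ← Matrix.mul_assoc, aux_PS vst θs hvst]
  simp

theorem aux_contr {N : ℕ} [NeZero N] (vst θs : Fin N → ℝ) (hvst : ∀ k, 0 < vst k)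
    (x : Fin N × Fin 2 → ℝ) :
    (Pmat vst θs).mulVec x ⬝ᵥ (Pmat vst θs).mulVec x ≤ x ⬝ᵥ x := by
  have h1 : (Pmat vst θs).mulVec x ⬝ᵥ (Pmat vst θs).mulVec x
      = x ⬝ᵥ x - ((Smat vst θs)ᵀ.mulVec x) ⬝ᵥ ((Smat vst θs)ᵀ.mulVec x) := by
    rw [Matrix.dotProduct_mulVec, ← Matrix.mulVec_transpose, aux_PT, Matrix.mulVec_mulVec,
      aux_PP vst θs hvst, Pmat, Matrix.sub_mulVec, Matrix.one_mulVec, sub_dotProduct,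
      Matrix.dotProduct_mulVec ((Smat vst θs)ᵀ.mulVec x), ← Matrix.mulVec_transpose,
      Matrix.transpose_transpose, Matrix.mulVec_mulVec]
  have h2 : 0 ≤ ((Smat vst θs)ᵀ.mulVec x) ⬝ᵥ ((Smat vst θs)ᵀ.mulVec x) :=
    Finset.sum_nonneg fun i _ => mul_self_nonneg _
  linarith

theorem aux_norm {N : ℕ} (x : St N) : ‖x‖ ^ 2 = ofSt x ⬝ᵥ ofSt x := by
  rw [EuclideanSpace.real_norm_sq_eq]
  simp only [dotProduct, ofSt, sq]
  rfl

theorem aux_dist {N : ℕ} [NeZero N] (vst θs : Fin N → ℝ) (hvst : ∀ k, 0 < vst k) (v : St N) :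
    (Pmat vst θs).mulVec (ofSt v) ⬝ᵥ (Pmat vst θs).mulVec (ofSt v)
      ≤ infDist v (SsetR vst θs) ^ 2 := by
  have hn : 0 ≤ (Pmat vst θs).mulVec (ofSt v) ⬝ᵥ (Pmat vst θs).mulVec (ofSt v) :=
    Finset.sum_nonneg fun i _ => mul_self_nonneg _
  rw [← Real.sqrt_le_left infDist_nonneg]
  have hne : (SsetR vst θs).Nonempty := ⟨_, 0, rfl⟩
  refine (le_infDist hne).2 ?_
  rintro s ⟨c, rfl⟩
  rw [Real.sqrt_le_left dist_nonneg, dist_eq_norm, aux_norm]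
  have h := aux_contr vst θs hvst (ofSt v - (Smat vst θs).mulVec c)
  rw [Matrix.mulVec_sub, Matrix.mulVec_mulVec, aux_PS vst θs hvst, Matrix.zero_mulVec,
    sub_zero] at h
  exact h

theorem aux_K {N : ℕ} (w : Fin N → Fin N → ℝ) (vst θs : Fin N → ℝ) (y : Fin N × Fin 2 → ℝ) :
    y ⬝ᵥ (Kbig w vst θs).mulVec y
      = ∑ k, (∑ j, w j k * (1 - vst j / vst k * Real.cos (θs j - θs k)))
          * (y (k, 0) * y (k, 0) + y (k, 1) * y (k, 1)) := by
  have e00 : ∀ k, Kmat w vst θs k 0 0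
      = ∑ j, w j k * (1 - vst j / vst k * Real.cos (θs j - θs k)) := by
    intro k; simp [Kmat, Rot, Matrix.sum_apply]
  have e11 : ∀ k, Kmat w vst θs k 1 1
      = ∑ j, w j k * (1 - vst j / vst k * Real.cos (θs j - θs k)) := by
    intro k; simp [Kmat, Rot, Matrix.sum_apply]
  have e01 : ∀ k, Kmat w vst θs k 0 1 = - Kmat w vst θs k 1 0 := by
    intro k; simp [Kmat, Rot, Matrix.sum_apply]
  simp only [dotProduct, Matrix.mulVec, Kbig, _root_.blockDiag, Matrix.of_apply,
    Fintype.sum_prod_type, Fin.sum_univ_two, ite_mul, zero_mul]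
  refine Finset.sum_congr rfl fun k _ => ?_
  simp only [Finset.sum_add_distrib, Finset.sum_ite_eq, Finset.mem_univ, if_true]
  rw [e01, e11, e00]
  ring

/-- vᵀP𝓚Pv ≤ ‖v‖_S² · max_k Σ_j w_{jk}|1 − (v*_j/v*_k)cos(θ*_{jk})|. -/
theorem stmt9 (N : ℕ) [NeZero N] (hN : 2 ≤ N)
    (w : Fin N → Fin N → ℝ)
    (hw_symm : ∀ j k, w j k = w k j) (hw_nonneg : ∀ j k, 0 ≤ w j k)
    (hw_irrefl : ∀ k, w k k = 0) (hconn : (wGraph w).Connected)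
    (vst : Fin N → ℝ) (hvst : ∀ k, 0 < vst k)
    (θs : Fin N → ℝ) (hθ0 : θs 0 = 0) (hθmem : ∀ k, θs k ∈ Set.Icc (0 : ℝ) (2 * π))
    (v : St N) :
    qf (Pmat vst θs * Kbig w vst θs * Pmat vst θs) v
      ≤ infDist v (SsetR vst θs) ^ 2
          * ⨆ k, ∑ j, w j k * |1 - vst j / vst k * Real.cos (θs j - θs k)| := by
  have h1 : qf (Pmat vst θs * Kbig w vst θs * Pmat vst θs) v
      = (Pmat vst θs).mulVec (ofSt v) ⬝ᵥ
          (Kbig w vst θs).mulVec ((Pmat vst θs).mulVec (ofSt v)) := by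
    rw [qf, ← Matrix.mulVec_mulVec, ← Matrix.mulVec_mulVec, Matrix.dotProduct_mulVec,
      ← Matrix.mulVec_transpose, aux_PT]
  rw [h1, aux_K]
  have h2 := aux_dist vst θs hvst v
  generalize (Pmat vst θs).mulVec (ofSt v) = y at h2 ⊢
  set M := ⨆ k, ∑ j, w j k * |1 - vst j / vst k * Real.cos (θs j - θs k)| with hM
  have hle : ∀ k, ∑ j, w j k * |1 - vst j / vst k * Real.cos (θs j - θs k)| ≤ M := fun k =>
    le_ciSup (f := fun k => ∑ j, w j k * |1 - vst j / vst k * Real.cos (θs j - θs k)|)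
      (Set.finite_range _).bddAbove k
  have hM0 : 0 ≤ M := le_trans
    (Finset.sum_nonneg fun j _ => mul_nonneg (hw_nonneg j 0) (abs_nonneg _)) (hle 0)
  refine le_trans ?_ (mul_le_mul_of_nonneg_right h2 hM0)
  simp only [dotProduct, Fintype.sum_prod_type, Fin.sum_univ_two]
  rw [Finset.sum_mul]
  refine Finset.sum_le_sum fun k _ => ?_
  rw [mul_comm]
  refine mul_le_mul_of_nonneg_left (le_trans ?_ (hle k))
    (add_nonneg (mul_self_nonneg _) (mul_self_nonneg _))
  exact Finset.sum_le_sum fun j _ => mul_le_mul_of_nonneg_left (le_abs_self _) (hw_nonneg j k)
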